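/- Let M be an idempotent magma satisfying the generalized entropic property. If M is left cancellative (z*x = z*y implies x = y for all x,y,z) or right cancellative (x*z = y*z implies x = y for all x,y,z), then M is medial. -/

import Mathlib

/-- Evaluation of a binary term (an element of the free magma on two
generators) in a magma `M` under the assignment `0 ↦ a`, `1 ↦ b`. -/
def evalBin {M : Type*} [Mul M] (t : FreeMagma (Fin 2)) (a b : M) : M :=
  FreeMagma.lift ![a, b] t

/-- A magma satisfies the generalized entropic property if there are binary
terms `t`, `s` with `(x*y)*(u*v) = t(x,u)*s(y,v)`. -/
def GEP (M : Type*) [Mul M] : Prop :=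
  ∃ t s : FreeMagma (Fin 2),
    ∀ x y u v : M, (x * y) * (u * v) = evalBin t x u * evalBin s y v

theorem evalBin_self {M : Type*} [Mul M] (hidem : ∀ x : M, x * x = x)
    (t : FreeMagma (Fin 2)) (a : M) : evalBin t a a = a := by
  unfold evalBin
  induction t using FreeMagma.recOnMul with
  | ih1 i => fin_cases i <;> simp
  | ih2 p q hp hq => rw [map_mul, hp, hq, hidem]

/-- An idempotent left or right cancellative magma satisfying the generalized
entropic property is medial. -/
theorem stmt_10 {M : Type*} [Mul M]
    (hidem : ∀ x : M, x * x = x)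
    (hGEP : GEP M)
    (hcanc : (∀ x y z : M, z * x = z * y → x = y) ∨
             (∀ x y z : M, x * z = y * z → x = y)) :
    ∀ x y u v : M, (x * y) * (u * v) = (x * u) * (y * v) := by
  obtain ⟨t, s, h⟩ := hGEP
  have ht := evalBin_self hidem t
  have hs := evalBin_self hidem s
  generalize (evalBin t : M → M → M) = T at h ht
  generalize (evalBin s : M → M → M) = S at h hs
  rcases hcanc with hc | hc
  · have hS : ∀ x v, S x v = x * v := by
      intro x v
      have := h x x x v
      rw [ht, hidem] at this
      exact (hc _ _ _ this).symm
    simp only [hS] at h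
    have hd : ∀ x y v : M, x * (y * v) = (x * y) * (x * v) := by
      intro x y v
      rw [h, ht]
    have key : ∀ x u z, T x u * z = (x * u) * z := by
      intro x u z
      have h1 : T x u * x = (x * u) * x := by
        have e := h x x u x
        rw [hidem x] at e
        rw [← e, hd, hidem]
      have h2 : T x u * (x * z) = (x * u) * (x * z) := by
        rw [← h x x u z, hidem, hd]
      rw [hd, hd (x * u), h1] at h2
      exact hc _ _ _ h2
    intro x y u v
    rw [h, key]
  · have hT : ∀ x y, T x y = x * y := by
      intro x y
      have := h x y y y
      rw [hs, hidem] at this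
      exact (hc _ _ _ this).symm
    simp only [hT] at h
    have hd : ∀ x u y : M, (x * u) * y = (x * y) * (u * y) := by
      intro x u y
      rw [h, hs]
    have key : ∀ y v z, z * S y v = z * (y * v) := by
      intro y v z
      have h1 : v * S y v = v * (y * v) := by
        have e := h v y v v
        rw [hidem v] at e
        rw [← e, hd, hidem]
      have h2 : (z * v) * S y v = (z * v) * (y * v) := by
        rw [← h z y v v, hidem, hd]
      rw [hd, hd z v (y * v), h1] at h2
      exact hc _ _ _ h2
    intro x y u v
    rw [h, key]
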